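/- Let μ > −3/2, −1/2 < ν < μ+1 and 0 < β < 1. Then for all x > 0, ∫_0^x e^{−βu} u^ν t̃_{μ,ν}(u) du < ((μ+ν+(9+√17)/2)/((2ν+1)(1−β))) · e^{−βx} x^ν t̃_{μ+1,ν+1}(x). -/

import Mathlib

/-!
Put `a = (μ - ν + 3) / 2 = α + 1`, `b = (μ + ν + 3) / 2 = α + 1 + ν` and
`S a b z = ∑ zᵏ / (Γ(k + a) Γ(k + b))`. With `p x = S a b (x² / 4)` and
`q x = S a (b + 1) (x² / 4)` one has `t̃_{μ,ν}(x) = (x/2)^(μ+1) p x` and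
`t̃_{μ+1,ν+1}(x) = (x/2)^(μ+2) q x`. On `x > 0` the pair `(p, q)` solves the linear system
`q' = (2/x) (p - b q)`, `p' = (2/x) (e + x² q / 4 - α p)`, where `e = 1 / (Γ(α) Γ(b))`, and the
whole proof uses only this system and `0 < e ≤ α b q`; these facts are collected in `LommelSystem`.

Two bounds on the ratio `p / q` come from integrating factors:
`(x + ν + 1/2) q < 2 p < (x + 2 b) q` (`LommelSystem.lower`, `LommelSystem.upper`).

Write `I x = ∫₀ˣ e^{-βu} u^{2α+2ν} p`, `J x = e^{-βx} x^{2α+2ν+1} q / 2`, `d = 2ν + 1`, `ε = 1 - β`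
and `C = 2 b + s` with `s = (3 + √17) / 2`. Up to a common power of 2, the claim is
`I x < C / (d ε) * J x`.

* Differentiating `e^{-βx} x^{2α+2ν+1} (p + x q / 2)` gives
  `d I x ≤ e^{-βx} x^{2α+2ν+1} (p + x q / 2)` for all `x` (`LommelSystem.integral_le`); with the
  upper ratio bound this yields the claim whenever `ε (2 x + 2 b) ≤ C` (`LommelSystem.small`).
* When `ε (2 x + 2 b) ≥ C`, the lower ratio bound shows that the derivative of `C / (d ε) * J`
  dominates the integrand (`LommelSystem.deriv_dominates`), so the inequality propagates from the
  threshold to all larger `x`.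
-/

open Real MeasureTheory

/-- Normalised modified Lommel function of the first kind. -/
noncomputable def lommel (μ ν x : ℝ) : ℝ :=
  ∑' k : ℕ, (x / 2) ^ (μ + 2 * (k : ℝ) + 1) /
    (Real.Gamma ((k : ℝ) + (μ - ν + 3) / 2) * Real.Gamma ((k : ℝ) + (μ + ν + 3) / 2))

open Set Filter Topology

/-! ### The power series -/

/-- The coefficient `1 / (Γ(k + a) Γ(k + b))`. -/
noncomputable def lommelCoeff (a b : ℝ) (k : ℕ) : ℝ :=
  1 / (Real.Gamma (k + a) * Real.Gamma (k + b))

/-- The entire function `∑ zᵏ / (Γ(k + a) Γ(k + b))`, restricted to the real line. -/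
noncomputable def lommelSeries (a b z : ℝ) : ℝ := ∑' k : ℕ, lommelCoeff a b k * z ^ k

lemma lommelCoeff_pos {a b : ℝ} (ha : 0 < a) (hb : 0 < b) (k : ℕ) : 0 < lommelCoeff a b k := by
  have h1 : 0 < Real.Gamma (k + a) := Real.Gamma_pos_of_pos (by positivity)
  have h2 : 0 < Real.Gamma (k + b) := Real.Gamma_pos_of_pos (by positivity)
  unfold lommelCoeff
  positivity

lemma lommelCoeff_succ {a b : ℝ} (ha : 0 < a) (hb : 0 < b) (k : ℕ) :
    lommelCoeff a b (k + 1) = lommelCoeff a b k / ((k + a) * (k + b)) := by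
  have h1 : 0 < Real.Gamma (k + a) := Real.Gamma_pos_of_pos (by positivity)
  have h2 : 0 < Real.Gamma (k + b) := Real.Gamma_pos_of_pos (by positivity)
  have h3 : (0 : ℝ) < k + a := by positivity
  have h4 : (0 : ℝ) < k + b := by positivity
  unfold lommelCoeff
  push_cast
  rw [show (k : ℝ) + 1 + a = (k + a) + 1 by ring, show (k : ℝ) + 1 + b = (k + b) + 1 by ring,
    Real.Gamma_add_one h3.ne', Real.Gamma_add_one h4.ne']
  field_simp

/-- Raising the second parameter: `c(a, b) = (k + b) c(a, b + 1)`. -/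
lemma lommelCoeff_right {a b : ℝ} (hb : 0 < b) (k : ℕ) :
    lommelCoeff a b k = (k + b) * lommelCoeff a (b + 1) k := by
  have h4 : (0 : ℝ) < k + b := by positivity
  unfold lommelCoeff
  rw [show (k : ℝ) + (b + 1) = (k + b) + 1 by ring, Real.Gamma_add_one h4.ne']
  field_simp

/-- Shifting the index trades a factor `k + α` for a unit step in both parameters. -/
lemma lommelCoeff_shift {α b : ℝ} (hα : 0 < α) (k : ℕ) :
    ((k + 1 : ℕ) + α) * lommelCoeff (α + 1) b (k + 1) = lommelCoeff (α + 1) (b + 1) k := by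
  have h3 : (0 : ℝ) < k + 1 + α := by positivity
  unfold lommelCoeff
  push_cast
  rw [show (k : ℝ) + 1 + (α + 1) = (k + 1 + α) + 1 by ring, Real.Gamma_add_one h3.ne',
    show (k : ℝ) + (α + 1) = k + 1 + α by ring, show (k : ℝ) + 1 + b = k + (b + 1) by ring]
  field_simp

lemma lommelSeries_summable {a b : ℝ} (ha : 0 < a) (hb : 0 < b) (z : ℝ) :
    Summable fun k : ℕ => lommelCoeff a b k * z ^ k := by
  rcases eq_or_ne z 0 with rfl | hz
  · refine summable_of_ne_finset_zero (s := {0}) fun k hk => ?_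
    simp at hk
    simp [hk]
  refine summable_of_ratio_test_tendsto_lt_one (l := 0) one_pos
    (Eventually.of_forall fun k => mul_ne_zero (lommelCoeff_pos ha hb k).ne' (pow_ne_zero _ hz)) ?_
  have hk : ∀ k : ℕ, ‖lommelCoeff a b (k + 1) * z ^ (k + 1)‖ / ‖lommelCoeff a b k * z ^ k‖
      = |z| / ((k + a) * (k + b)) := by
    intro k
    have h0 := lommelCoeff_pos ha hb k
    have h3 : (0 : ℝ) < k + a := by positivity
    have h4 : (0 : ℝ) < k + b := by positivity
    have h5 : 0 < |z| := abs_pos.mpr hz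
    rw [lommelCoeff_succ ha hb, norm_mul, norm_mul, norm_pow, norm_pow, Real.norm_eq_abs,
      Real.norm_eq_abs, Real.norm_eq_abs, abs_of_pos h0, abs_of_pos (by positivity)]
    field_simp
    ring
  simp_rw [hk]
  refine tendsto_const_nhds.div_atTop (Tendsto.atTop_mul_atTop₀ ?_ ?_) <;>
  exact tendsto_atTop_add_const_right _ _ tendsto_natCast_atTop_atTop

lemma lommelSeries_summable_deriv {a b : ℝ} (ha : 0 < a) (hb : 0 < b) {R : ℝ} (hR : 1 ≤ R) :
    Summable fun k : ℕ => lommelCoeff a b k * (k * R ^ (k - 1)) := by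
  refine Summable.of_nonneg_of_le
    (fun k => mul_nonneg (lommelCoeff_pos ha hb k).le (by positivity)) (fun k => ?_)
    (lommelSeries_summable ha hb (2 * R))
  have h0 := lommelCoeff_pos ha hb k
  have h1 : (k : ℝ) ≤ 2 ^ k := by exact_mod_cast Nat.lt_two_pow_self.le
  have h2 : R ^ (k - 1) ≤ R ^ k := pow_le_pow_right₀ hR (Nat.sub_le _ _)
  rw [mul_pow]
  gcongr

lemma lommelSeries_hasDerivAt {a b : ℝ} (ha : 0 < a) (hb : 0 < b) (z : ℝ) :
    HasDerivAt (lommelSeries a b) (∑' k : ℕ, lommelCoeff a b k * (k * z ^ (k - 1))) z := by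
  have hR : (1 : ℝ) ≤ |z| + 1 := by linarith [abs_nonneg z]
  have hz : z ∈ Metric.ball (0 : ℝ) (|z| + 1) := by simp
  refine hasDerivAt_tsum_of_isPreconnected (g := fun (k : ℕ) y => lommelCoeff a b k * y ^ k)
    (g' := fun (k : ℕ) y => lommelCoeff a b k * (k * y ^ (k - 1)))
    (lommelSeries_summable_deriv ha hb hR)
    Metric.isOpen_ball (convex_ball (0 : ℝ) (|z| + 1)).isPreconnected
    (fun k y _ => (hasDerivAt_pow k y).const_mul _) (fun k y hy => ?_)
    hz (lommelSeries_summable ha hb z) hz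
  have h0 := lommelCoeff_pos ha hb k
  have h1 : |y| ≤ |z| + 1 := by simpa using (mem_ball_zero_iff.mp hy).le
  rw [norm_mul, norm_mul, norm_pow, Real.norm_eq_abs, Real.norm_eq_abs, Real.norm_eq_abs,
    abs_of_pos h0, Nat.abs_cast]
  gcongr

lemma lommelSeries_summable_natMul {a b : ℝ} (ha : 0 < a) (hb : 0 < b) (z : ℝ) :
    Summable fun k : ℕ => (k : ℝ) * lommelCoeff a b k * z ^ k := by
  have hR : (1 : ℝ) ≤ |z| + 1 := by linarith [abs_nonneg z]
  refine Summable.of_norm_bounded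
    ((lommelSeries_summable_deriv ha hb hR).mul_left (|z| + 1)) fun k => ?_
  have h0 := lommelCoeff_pos ha hb k
  rw [norm_mul, norm_mul, norm_pow, Real.norm_eq_abs, Real.norm_eq_abs, Real.norm_eq_abs,
    abs_of_pos h0, Nat.abs_cast]
  rcases k with _ | k
  · simp
  · have h1 : |z| ^ (k + 1) ≤ (|z| + 1) ^ (k + 1) := by gcongr; linarith
    calc ((k + 1 : ℕ) : ℝ) * lommelCoeff a b (k + 1) * |z| ^ (k + 1)
        ≤ ((k + 1 : ℕ) : ℝ) * lommelCoeff a b (k + 1) * (|z| + 1) ^ (k + 1) := by gcongr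
      _ = _ := by rw [Nat.add_sub_cancel]; ring

lemma lommelSeries_mul_deriv {a b : ℝ} (z : ℝ) :
    z * ∑' k : ℕ, lommelCoeff a b k * (k * z ^ (k - 1))
      = ∑' k : ℕ, (k : ℝ) * lommelCoeff a b k * z ^ k := by
  rw [← tsum_mul_left]
  congr 1
  ext k
  rcases k with _ | k
  · simp
  · rw [Nat.add_sub_cancel]; ring

lemma lommelSeries_raise {a b : ℝ} (ha : 0 < a) (hb : 0 < b) (z : ℝ) :
    ∑' k : ℕ, (k : ℝ) * lommelCoeff a (b + 1) k * z ^ k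
      = lommelSeries a b z - b * lommelSeries a (b + 1) z := by
  have hb' : 0 < b + 1 := by linarith
  unfold lommelSeries
  rw [eq_sub_iff_add_eq, ← tsum_mul_left, ← Summable.tsum_add
    (lommelSeries_summable_natMul ha hb' z) ((lommelSeries_summable ha hb' z).mul_left b)]
  congr 1
  ext k
  rw [lommelCoeff_right hb]
  ring

lemma lommelSeries_lower {α b : ℝ} (hα : 0 < α) (hb : 0 < b) (z : ℝ) :
    ∑' k : ℕ, (k : ℝ) * lommelCoeff (α + 1) b k * z ^ k
      = α * lommelCoeff (α + 1) b 0 + z * lommelSeries (α + 1) (b + 1) z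
        - α * lommelSeries (α + 1) b z := by
  have ha : 0 < α + 1 := by linarith
  have hs := (lommelSeries_summable_natMul ha hb z).add
    ((lommelSeries_summable ha hb z).mul_left α)
  unfold lommelSeries
  rw [eq_sub_iff_add_eq, ← tsum_mul_left, ← tsum_mul_left, ← Summable.tsum_add
    (lommelSeries_summable_natMul ha hb z) ((lommelSeries_summable ha hb z).mul_left α),
    hs.tsum_eq_zero_add]
  congr 1
  · simp
  · congr 1
    ext k
    rw [← lommelCoeff_shift hα]
    ring

lemma lommelSeries_ge {a b : ℝ} (ha : 0 < a) (hb : 0 < b) {z : ℝ} (hz : 0 ≤ z) :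
    lommelCoeff a b 0 ≤ lommelSeries a b z := by
  have := (lommelSeries_summable ha hb z).le_tsum 0
    (fun k _ => mul_nonneg (lommelCoeff_pos ha hb k).le (pow_nonneg hz k))
  simpa [lommelSeries] using this

lemma lommel_eq (μ ν : ℝ) {x : ℝ} (hx : 0 < x) :
    lommel μ ν x = (x / 2) ^ (μ + 1) *
      lommelSeries ((μ - ν + 3) / 2) ((μ + ν + 3) / 2) (x ^ 2 / 4) := by
  unfold lommel lommelSeries lommelCoeff
  rw [← tsum_mul_left]
  congr 1
  ext k
  have h : (x / 2) ^ (μ + 2 * (k : ℝ) + 1) = (x / 2) ^ (μ + 1) * (x ^ 2 / 4) ^ k := by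
    rw [show μ + 2 * (k : ℝ) + 1 = (μ + 1) + ((2 * k : ℕ) : ℝ) by push_cast; ring,
      Real.rpow_add_natCast (by positivity), pow_mul]
    congr 2
    ring
  rw [h]
  ring

/-! ### The differential system -/

/-- The analytic facts about `p x = S (α+1) b (x²/4)` and `q x = S (α+1) (b+1) (x²/4)`,
`b = α + 1 + ν`, on which the estimates rest. The inhomogeneity is `e = 1 / (Γ(α) Γ(b))`. -/
structure LommelSystem (α ν e : ℝ) (p q : ℝ → ℝ) : Prop where
  hα : 0 < α
  hν : -1 / 2 < ν
  he : 0 < e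
  cp : Continuous p
  cq : Continuous q
  dp : ∀ x, 0 < x → HasDerivAt p (2 / x * (e + x ^ 2 / 4 * q x - α * p x)) x
  dq : ∀ x, 0 < x → HasDerivAt q (2 / x * (p x - (α + 1 + ν) * q x)) x
  hq : ∀ x, e ≤ α * (α + 1 + ν) * q x

lemma lommelSystem {α ν : ℝ} (hα : 0 < α) (hν : -1 / 2 < ν) :
    LommelSystem α ν (α * lommelCoeff (α + 1) (α + 1 + ν) 0)
      (fun x => lommelSeries (α + 1) (α + 1 + ν) (x ^ 2 / 4))
      (fun x => lommelSeries (α + 1) (α + 1 + ν + 1) (x ^ 2 / 4)) := by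
  have ha : 0 < α + 1 := by linarith
  have hb : 0 < α + 1 + ν := by linarith
  have hb' : 0 < α + 1 + ν + 1 := by linarith
  have hc : ∀ {b : ℝ}, 0 < b → Continuous fun x : ℝ => lommelSeries (α + 1) b (x ^ 2 / 4) := by
    intro b hb
    have : Continuous (lommelSeries (α + 1) b) :=
      continuous_iff_continuousAt.mpr fun z => (lommelSeries_hasDerivAt ha hb z).continuousAt
    fun_prop
  have hd : ∀ {b : ℝ}, 0 < b → ∀ x : ℝ, 0 < x →
      HasDerivAt (fun x : ℝ => lommelSeries (α + 1) b (x ^ 2 / 4))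
        (2 / x * ∑' k : ℕ, (k : ℝ) * lommelCoeff (α + 1) b k * (x ^ 2 / 4) ^ k) x := by
    intro b hb x hx
    have h1 : HasDerivAt (fun x : ℝ => x ^ 2 / 4) (x / 2) x := by
      refine ((hasDerivAt_pow 2 x).div_const 4).congr_deriv ?_
      norm_num; ring
    refine ((lommelSeries_hasDerivAt ha hb (x ^ 2 / 4)).comp x h1).congr_deriv ?_
    rw [← lommelSeries_mul_deriv]
    field_simp
    ring
  refine ⟨hα, hν, mul_pos hα (lommelCoeff_pos ha hb 0), hc hb, hc hb', ?_, ?_, ?_⟩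
  · intro x hx
    rw [← lommelSeries_lower hα hb]
    exact hd hb x hx
  · intro x hx
    rw [← lommelSeries_raise ha hb]
    exact hd hb' x hx
  · intro x
    rw [lommelCoeff_right hb, Nat.cast_zero, zero_add, ← mul_assoc]
    exact mul_le_mul_of_nonneg_left (lommelSeries_ge ha hb' (by positivity)) (by positivity)

/-- A function `eˣ x^r R(x)` with `r > 0` vanishes at `0`, so `R > 0` as soon as its derivative
`eˣ x^(r-1) (x R + r R + x R')` is positive. -/
lemma pos_of_integrating_factor {r : ℝ} (hr : 0 < r) {R R' : ℝ → ℝ} (cR : Continuous R)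
    (dR : ∀ x, 0 < x → HasDerivAt R (R' x) x)
    (h : ∀ x, 0 < x → 0 < (x + r) * R x + x * R' x) {x : ℝ} (hx : 0 < x) : 0 < R x := by
  have hmono : StrictMonoOn (fun y : ℝ => Real.exp y * y ^ r * R y) (Ici 0) := by
    refine strictMonoOn_of_deriv_pos (convex_Ici 0) ?_ ?_
    · exact Continuous.continuousOn
        ((Real.continuous_exp.mul (Real.continuous_rpow_const hr.le)).mul cR)
    · intro y hy
      rw [interior_Ici] at hy
      have hy : 0 < y := hy
      have hd := ((Real.hasDerivAt_exp y).mul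
        (Real.hasDerivAt_rpow_const (p := r) (Or.inl hy.ne'))).mul (dR y hy)
      have hyr : y ^ r = y * y ^ (r - 1) := by
        rw [Real.rpow_sub_one hy.ne']; field_simp
      have he : deriv (fun y : ℝ => Real.exp y * y ^ r * R y) y
          = Real.exp y * y ^ (r - 1) * ((y + r) * R y + y * R' y) := by
        refine (hd.congr_deriv ?_).deriv
        simp only [Pi.mul_apply, hyr]
        ring
      rw [he]
      have := h y hy
      positivity
  have h0 := hmono (mem_Ici.mpr le_rfl) (mem_Ici.mpr hx.le) hx
  simp only [Real.zero_rpow hr.ne', mul_zero, zero_mul] at h0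
  exact pos_of_mul_pos_right h0 (by positivity)

namespace LommelSystem

variable {α ν e : ℝ} {p q : ℝ → ℝ}

lemma q_pos (S : LommelSystem α ν e p q) (x : ℝ) : 0 < q x := by
  have h := S.hq x
  have h1 := S.hα
  have h2 := S.hν
  have h3 := S.he
  have h4 : 0 < α * (α + 1 + ν) := mul_pos h1 (by linarith)
  exact pos_of_mul_pos_right (h3.trans_le h) h4.le

/-- The lower ratio bound, equivalent to
`x t̃_{μ,ν}(x) > (x + ν + 1/2) t̃_{μ+1,ν+1}(x)`. -/
lemma lower (S : LommelSystem α ν e p q) {x : ℝ} (hx : 0 < x) :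
    (x + ν + 1 / 2) * q x < 2 * p x := by
  have h1 := S.hα
  have h2 := S.hν
  have h3 := S.he
  have := pos_of_integrating_factor (r := 2 * α + ν + 1 / 2) (by linarith)
    (R := fun x => 2 * p x - (x + ν + 1 / 2) * q x)
    (R' := fun x => 2 * (2 / x * (e + x ^ 2 / 4 * q x - α * p x)) -
      (q x + (x + ν + 1 / 2) * (2 / x * (p x - (α + 1 + ν) * q x))))
    (by have := S.cp; have := S.cq; fun_prop)
    (fun y hy => by
      refine (((S.dp y hy).const_mul 2).sub
        ((((hasDerivAt_id y).add_const ν).add_const (1 / 2)).mul (S.dq y hy))).congr_deriv ?_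
      simp)
    (fun y hy => by
      have hq := S.q_pos y
      have : (y + (2 * α + ν + 1 / 2)) * (2 * p y - (y + ν + 1 / 2) * q y) +
        y * (2 * (2 / y * (e + y ^ 2 / 4 * q y - α * p y)) -
          (q y + (y + ν + 1 / 2) * (2 / y * (p y - (α + 1 + ν) * q y))))
          = (ν + 1 / 2) * (ν + 3 / 2) * q y + 4 * e := by
        field_simp
        ring
      rw [this]
      have h5 : 0 < ν + 1 / 2 := by linarith
      have h6 : 0 < ν + 3 / 2 := by linarith
      positivity) hx
  linarith

/-- The upper ratio bound, equivalent to
`x t̃_{μ,ν}(x) < (x + μ + ν + 3) t̃_{μ+1,ν+1}(x)`. -/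
lemma upper (S : LommelSystem α ν e p q) {x : ℝ} (hx : 0 < x) :
    2 * p x < (x + 2 * (α + 1 + ν)) * q x := by
  have h1 := S.hα
  have h2 := S.hν
  have h3 := S.he
  have := pos_of_integrating_factor (r := 2 * α + 2 * (α + 1 + ν)) (by linarith)
    (R := fun x => (x + 2 * (α + 1 + ν)) * q x - 2 * p x)
    (R' := fun x => (q x + (x + 2 * (α + 1 + ν)) * (2 / x * (p x - (α + 1 + ν) * q x)))
      - 2 * (2 / x * (e + x ^ 2 / 4 * q x - α * p x)))
    (by have := S.cp; have := S.cq; fun_prop)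
    (fun y hy => by
      refine ((((hasDerivAt_id y).add_const (2 * (α + 1 + ν))).mul (S.dq y hy)).sub
        ((S.dp y hy).const_mul 2)).congr_deriv ?_
      simp)
    (fun y hy => by
      have hq := S.q_pos y
      have he := S.hq y
      have : (y + (2 * α + 2 * (α + 1 + ν))) * ((y + 2 * (α + 1 + ν)) * q y - 2 * p y) +
        y * ((q y + (y + 2 * (α + 1 + ν)) * (2 / y * (p y - (α + 1 + ν) * q y)))
          - 2 * (2 / y * (e + y ^ 2 / 4 * q y - α * p y)))
          = (2 * (α + 1 + ν) + 2 * α + 1) * y * q y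
            + 4 * (α * (α + 1 + ν) * q y - e) := by
        field_simp
        ring
      rw [this]
      have h5 : 0 < 2 * (α + 1 + ν) + 2 * α + 1 := by linarith
      have h6 : 0 < (2 * (α + 1 + ν) + 2 * α + 1) * y * q y := by positivity
      linarith) hx
  linarith

/-! ### Estimating the integral -/

/-- The exponent `2α + 2ν` may be negative, but exceeds `-1`. -/
lemma integrable (S : LommelSystem α ν e p q) (β a b : ℝ) :
    IntervalIntegrable (fun u => Real.exp (-β * u) * u ^ (2 * α + 2 * ν) * p u) volume a b := by
  have h1 := S.hα
  have h2 := S.hν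
  have hr : IntervalIntegrable (fun u : ℝ => u ^ (2 * α + 2 * ν)) volume a b :=
    intervalIntegral.intervalIntegrable_rpow' (by linarith)
  have := hr.mul_continuousOn (g := fun u => Real.exp (-β * u) * p u)
    (Continuous.continuousOn (by have := S.cp; fun_prop))
  refine this.congr fun u _ => ?_
  ring

/-- Derivative of `e^{-βx} x^{m+1} f(x)`. -/
lemma _root_.hasDerivAt_exp_rpow_mul (β m : ℝ) {f : ℝ → ℝ} {f' x : ℝ} (hx : 0 < x)
    (hf : HasDerivAt f f' x) :
    HasDerivAt (fun x => Real.exp (-β * x) * x ^ (m + 1) * f x)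
      (Real.exp (-β * x) * x ^ m * ((m + 1 - β * x) * f x + x * f')) x := by
  have h1 : HasDerivAt (fun x : ℝ => Real.exp (-β * x)) (Real.exp (-β * x) * (-β)) x := by
    simpa using ((hasDerivAt_id x).const_mul (-β)).exp
  refine ((h1.mul (Real.hasDerivAt_rpow_const (p := m + 1) (Or.inl hx.ne'))).mul
    hf).congr_deriv ?_
  simp only [Pi.mul_apply, add_sub_cancel_right, Real.rpow_add_one hx.ne']
  ring

lemma integral_le (S : LommelSystem α ν e p q) {β : ℝ} (hβ : β < 1) {x : ℝ} (hx : 0 < x) :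
    (2 * ν + 1) * ∫ u in (0:ℝ)..x, Real.exp (-β * u) * u ^ (2 * α + 2 * ν) * p u ≤
      Real.exp (-β * x) * x ^ (2 * α + 2 * ν + 1) * (p x + x / 2 * q x) := by
  have h1 := S.hα
  have h2 := S.hν
  have h3 := S.he
  have hr : 0 < 2 * α + 2 * ν + 1 := by linarith
  have key := intervalIntegral.integral_le_sub_of_hasDeriv_right_of_le
    (a := 0) (b := x) hx.le
    (g := fun x => Real.exp (-β * x) * x ^ (2 * α + 2 * ν + 1) * (p x + x / 2 * q x))
    (g' := fun x => Real.exp (-β * x) * x ^ (2 * α + 2 * ν) *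
      ((2 * α + 2 * ν + 1 - β * x) * (p x + x / 2 * q x) +
      x * (2 / x * (e + x ^ 2 / 4 * q x - α * p x) +
        (1 / 2 * q x + x / 2 * (2 / x * (p x - (α + 1 + ν) * q x))))))
    (φ := fun u => (2 * ν + 1) * (Real.exp (-β * u) * u ^ (2 * α + 2 * ν) * p u))
    (by
      have := S.cp
      have := S.cq
      have := Real.continuous_rpow_const hr.le
      exact Continuous.continuousOn (by fun_prop))
    (fun y hy => by
      have hy := hy.1
      refine (hasDerivAt_exp_rpow_mul β (2 * α + 2 * ν) hy ?_).hasDerivWithinAt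
      exact (S.dp y hy).add (((hasDerivAt_id y).div_const 2).mul (S.dq y hy)))
    (by
      rw [integrableOn_Icc_iff_integrableOn_Ioc,
        ← intervalIntegrable_iff_integrableOn_Ioc_of_le hx.le]
      exact (S.integrable β 0 x).const_mul _)
    (fun y hy => by
      have hy := hy.1
      have hq := S.q_pos y
      have hl := S.lower hy
      have hp : 0 < p y := by
        have : 0 < (y + ν + 1 / 2) * q y := mul_pos (by linarith) hq
        linarith
      have : (2 * α + 2 * ν + 1 - β * y) * (p y + y / 2 * q y) +
          y * (2 / y * (e + y ^ 2 / 4 * q y - α * p y) +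
          (1 / 2 * q y + y / 2 * (2 / y * (p y - (α + 1 + ν) * q y))))
          = (2 * ν + 1) * p y + (1 - β) * y * (p y + y / 2 * q y) + 2 * e := by
        field_simp
        ring
      rw [this]
      have hε : 0 < 1 - β := by linarith
      have h6 : 0 < (1 - β) * y * (p y + y / 2 * q y) := by positivity
      calc _ = Real.exp (-β * y) * y ^ (2 * α + 2 * ν) * ((2 * ν + 1) * p y) := by ring
        _ ≤ _ := by gcongr; linarith)
  rw [intervalIntegral.integral_const_mul] at key
  simpa [Real.zero_rpow hr.ne'] using key

lemma small (S : LommelSystem α ν e p q) {β C : ℝ} (hβ : β < 1) {x : ℝ} (hx : 0 < x)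
    (hC : (1 - β) * (2 * x + 2 * (α + 1 + ν)) ≤ C) :
    ∫ u in (0:ℝ)..x, Real.exp (-β * u) * u ^ (2 * α + 2 * ν) * p u <
      C / ((2 * ν + 1) * (1 - β)) *
        (Real.exp (-β * x) * x ^ (2 * α + 2 * ν + 1) * (q x / 2)) := by
  have h2 := S.hν
  have hd : 0 < 2 * ν + 1 := by linarith
  have hε : 0 < 1 - β := by linarith
  have hq := S.q_pos x
  have hup := S.upper hx
  have hE : 0 < Real.exp (-β * x) * x ^ (2 * α + 2 * ν + 1) := by positivity
  have hle := S.integral_le hβ hx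
  set I := ∫ u in (0:ℝ)..x, Real.exp (-β * u) * u ^ (2 * α + 2 * ν) * p u
  set E := Real.exp (-β * x) * x ^ (2 * α + 2 * ν + 1)
  rw [div_mul_eq_mul_div, lt_div_iff₀ (by positivity)]
  have h4 : (1 - β) * (p x + x / 2 * q x) < C * (q x / 2) := by
    calc (1 - β) * (p x + x / 2 * q x)
        < (1 - β) * ((2 * x + 2 * (α + 1 + ν)) * (q x / 2)) := by gcongr; linarith
      _ = (1 - β) * (2 * x + 2 * (α + 1 + ν)) * (q x / 2) := by ring
      _ ≤ _ := by gcongr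
  calc I * ((2 * ν + 1) * (1 - β)) = (1 - β) * ((2 * ν + 1) * I) := by ring
    _ ≤ (1 - β) * (E * (p x + x / 2 * q x)) := by gcongr
    _ = E * ((1 - β) * (p x + x / 2 * q x)) := by ring
    _ < E * (C * (q x / 2)) := by gcongr
    _ = _ := by ring

/-- Beyond the threshold `(1 - β) (2 x + 2 b) = C`, the derivative of the right-hand side is at
least the integrand; here with the common factor `e^{-βx} x^{2α+2ν}` removed. -/
lemma deriv_dominates (S : LommelSystem α ν e p q) {β s C : ℝ} (hβ0 : 0 < β) (hβ : β < 1)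
    (hs : 2 ≤ s) (hCs : C = 2 * (α + 1 + ν) + s) {x : ℝ} (hx : 0 < x)
    (hC : C ≤ (1 - β) * (2 * x + 2 * (α + 1 + ν))) :
    p x ≤ C / ((2 * ν + 1) * (1 - β)) * ((2 * p x - (1 + β * x) * q x) / 2) := by
  have h1 := S.hα
  have h2 := S.hν
  have hd : 0 < 2 * ν + 1 := by linarith
  have hε : 0 < 1 - β := by linarith
  have hq := S.q_pos x
  have hlo := S.lower hx
  rw [div_mul_eq_mul_div, le_div_iff₀ (by positivity)]
  have hsx : s ≤ 2 * ((1 - β) * x) := by nlinarith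
  have hCd : 0 < C - (2 * ν + 1) := by linarith
  have hCd' : 0 < C - (2 * ν + 1) * (1 - β) := by nlinarith
  have key : C * (1 + β * x) ≤ (x + ν + 1 / 2) * (C - (2 * ν + 1) * (1 - β)) := by
    -- With `d = 2ν + 1`, the difference is at least `(s + d) (C - d) / 2 - C`.
    have e1 : (x + ν + 1 / 2) * (C - (2 * ν + 1) * (1 - β)) - C * (1 + β * x)
        = (1 - β) * x * (C - (2 * ν + 1)) + (2 * ν + 1) / 2 * (C - (2 * ν + 1))
          + (2 * ν + 1) ^ 2 * β / 2 - C := by ring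
    have e2 : s / 2 * (C - (2 * ν + 1)) ≤ (1 - β) * x * (C - (2 * ν + 1)) := by
      gcongr; linarith
    have e3 : 0 ≤ (s - 2) * (C - (2 * ν + 1)) := mul_nonneg (by linarith) hCd.le
    have e4 : 0 ≤ (2 * ν + 1) * (C - (2 * ν + 1) - 2) := mul_nonneg hd.le (by linarith)
    have e5 : 0 ≤ (2 * ν + 1) ^ 2 * β / 2 := by positivity
    linarith
  have k1 := mul_le_mul_of_nonneg_right key hq.le
  have k2 := mul_le_mul_of_nonneg_right hlo.le hCd'.le
  linarith

lemma main (S : LommelSystem α ν e p q) {β s C : ℝ} (hβ0 : 0 < β) (hβ : β < 1)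
    (hs : 2 ≤ s) (hCs : C = 2 * (α + 1 + ν) + s) {x : ℝ} (hx : 0 < x) :
    ∫ u in (0:ℝ)..x, Real.exp (-β * u) * u ^ (2 * α + 2 * ν) * p u <
      C / ((2 * ν + 1) * (1 - β)) *
        (Real.exp (-β * x) * x ^ (2 * α + 2 * ν + 1) * (q x / 2)) := by
  have h1 := S.hα
  have h2 := S.hν
  have hε : 0 < 1 - β := by linarith
  rcases le_total ((1 - β) * (2 * x + 2 * (α + 1 + ν))) C with hC | hC
  · exact S.small hβ hx hC
  -- The threshold, where `(1 - β) (2 x₀ + 2 b) = C`.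
  set x₀ := (C / (1 - β) - 2 * (α + 1 + ν)) / 2 with hx₀
  have hthr : (1 - β) * (2 * x₀ + 2 * (α + 1 + ν)) = C := by
    rw [hx₀]; field_simp; ring
  have hx₀pos : 0 < x₀ := by
    have : 2 * (α + 1 + ν) < C / (1 - β) := by
      rw [lt_div_iff₀ hε]; nlinarith
    linarith
  have hle : x₀ ≤ x := by
    have := le_of_mul_le_mul_left (hthr.trans_le hC) hε
    linarith
  have hs0 := S.small hβ hx₀pos hthr.le
  set K := C / ((2 * ν + 1) * (1 - β)) with hK
  have key := intervalIntegral.integral_le_sub_of_hasDeriv_right_of_le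
    (a := x₀) (b := x) hle
    (g := fun x => K * (Real.exp (-β * x) * x ^ (2 * α + 2 * ν + 1) * (q x / 2)))
    (g' := fun x => K * (Real.exp (-β * x) * x ^ (2 * α + 2 * ν) *
      ((2 * α + 2 * ν + 1 - β * x) * (q x / 2) +
      x * (2 / x * (p x - (α + 1 + ν) * q x) / 2))))
    (φ := fun u => Real.exp (-β * u) * u ^ (2 * α + 2 * ν) * p u)
    (by
      have := S.cq
      have := Real.continuous_rpow_const (q := 2 * α + 2 * ν + 1) (by linarith)
      exact Continuous.continuousOn (by fun_prop))
    (fun y hy => by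
      have hy : 0 < y := hx₀pos.trans hy.1
      exact ((hasDerivAt_exp_rpow_mul β (2 * α + 2 * ν) hy
        ((S.dq y hy).div_const 2)).const_mul K).hasDerivWithinAt)
    (by
      rw [integrableOn_Icc_iff_integrableOn_Ioc,
        ← intervalIntegrable_iff_integrableOn_Ioc_of_le hle]
      exact S.integrable β x₀ x)
    (fun y hy => by
      have hy0 : 0 < y := hx₀pos.trans hy.1
      have hdom := S.deriv_dominates hβ0 hβ hs hCs hy0 (by
        rw [← hthr]
        have := hy.1
        gcongr)
      have : (2 * α + 2 * ν + 1 - β * y) * (q y / 2) +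
          y * (2 / y * (p y - (α + 1 + ν) * q y) / 2)
          = (2 * p y - (1 + β * y) * q y) / 2 := by
        field_simp
        ring
      rw [this]
      calc _ ≤ Real.exp (-β * y) * y ^ (2 * α + 2 * ν) *
            (K * ((2 * p y - (1 + β * y) * q y) / 2)) := by gcongr
        _ = _ := by ring)
  rw [← intervalIntegral.integral_add_adjacent_intervals
    (S.integrable β 0 x₀) (S.integrable β x₀ x)]
  linarith

end LommelSystem

theorem stmt3 (μ ν β : ℝ) (hμ : μ > -3/2) (hν1 : -1/2 < ν) (hν2 : ν < μ + 1)
    (hβ1 : 0 < β) (hβ2 : β < 1) :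
    ∀ x : ℝ, 0 < x →
      ∫ u in (0:ℝ)..x, Real.exp (-β * u) * u ^ ν * lommel μ ν u <
        (μ + ν + (9 + Real.sqrt 17) / 2) / ((2 * ν + 1) * (1 - β)) *
          (Real.exp (-β * x) * x ^ ν * lommel (μ + 1) (ν + 1) x) := by
  intro x hx
  obtain ⟨α, rfl⟩ : ∃ α, μ = 2 * α + ν - 1 := ⟨(μ - ν + 1) / 2, by ring⟩
  have S := lommelSystem (α := α) (ν := ν) (by linarith) hν1
  have h17 : 1 ≤ Real.sqrt 17 := Real.one_le_sqrt.mpr (by norm_num)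
  have key := S.main (s := (3 + Real.sqrt 17) / 2)
    (C := 2 * α + ν - 1 + ν + (9 + Real.sqrt 17) / 2) hβ1 hβ2 (by linarith) (by ring) hx
  -- Both sides of the claim carry the same power of 2.
  have hpow : ∀ u : ℝ, 0 < u → ∀ m : ℝ,
      u ^ ν * (u / 2) ^ m = u ^ (ν + m) * (1 / 2 : ℝ) ^ m := by
    intro u hu m
    rw [div_eq_mul_one_div, Real.mul_rpow hu.le (by norm_num), Real.rpow_add hu, mul_assoc]
  have hint : ∫ u in (0:ℝ)..x, Real.exp (-β * u) * u ^ ν * lommel (2 * α + ν - 1) ν u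
      = (1 / 2 : ℝ) ^ (2 * α + ν) * ∫ u in (0:ℝ)..x, Real.exp (-β * u) * u ^ (2 * α + 2 * ν) *
        lommelSeries (α + 1) (α + 1 + ν) (u ^ 2 / 4) := by
    rw [← intervalIntegral.integral_const_mul]
    refine intervalIntegral.integral_congr_uIoo fun u hu => ?_
    rw [uIoo_of_le hx.le] at hu
    have := hpow u hu.1 (2 * α + ν)
    rw [show ν + (2 * α + ν) = 2 * α + 2 * ν by ring] at this
    rw [lommel_eq _ _ hu.1, show 2 * α + ν - 1 + 1 = 2 * α + ν by ring,
      show (2 * α + ν - 1 - ν + 3) / 2 = α + 1 by ring,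
      show (2 * α + ν - 1 + ν + 3) / 2 = α + 1 + ν by ring]
    linear_combination Real.exp (-β * u) *
      lommelSeries (α + 1) (α + 1 + ν) (u ^ 2 / 4) * this
  have hrhs : Real.exp (-β * x) * x ^ ν * lommel (2 * α + ν - 1 + 1) (ν + 1) x
      = (1 / 2 : ℝ) ^ (2 * α + ν) * (Real.exp (-β * x) * x ^ (2 * α + 2 * ν + 1) *
        (lommelSeries (α + 1) (α + 1 + ν + 1) (x ^ 2 / 4) / 2)) := by
    have := hpow x hx (2 * α + ν + 1)
    rw [show ν + (2 * α + ν + 1) = 2 * α + 2 * ν + 1 by ring,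
      Real.rpow_add_one (x := 1 / 2) (by norm_num)] at this
    rw [lommel_eq _ _ hx, show 2 * α + ν - 1 + 1 + 1 = 2 * α + ν + 1 by ring,
      show (2 * α + ν - 1 + 1 - (ν + 1) + 3) / 2 = α + 1 by ring,
      show (2 * α + ν - 1 + 1 + (ν + 1) + 3) / 2 = α + 1 + ν + 1 by ring]
    linear_combination Real.exp (-β * x) *
      lommelSeries (α + 1) (α + 1 + ν + 1) (x ^ 2 / 4) * this
  rw [hint, hrhs, mul_left_comm]
  gcongr
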